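/- arXiv:1903.03068 — 2 statements merged into one kernel-verified Lean document; each statement's English description precedes it below -/
import Mathlib

section
/- Let P, Q be quaternionic polynomials with deg P ≤ deg Q, and suppose there exists an imaginary unit I ∈ ℍ (I² = −1) such that all coefficients of Q lie in the real subalgebra ℂ_I generated by 1 and I. If every left root of Q has norm ≤ 1, and |P(x)| ≤ |Q(x)| for all x ∈ ℍ with |x| = 1, then |P'(x)| ≤ |Q'(x)| for all x ∈ ℂ_I with |x| = 1. -/
open Polynomial

theorem qb_comp {I : Quaternion ℝ} (hI : I ^ 2 = -1) :
    I.re = 0 ∧ I.imI ^ 2 + I.imJ ^ 2 + I.imK ^ 2 = 1 := by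
  have h0 := congrArg QuaternionAlgebra.re hI
  have h1 := congrArg QuaternionAlgebra.imI hI
  have h2 := congrArg QuaternionAlgebra.imJ hI
  have h3 := congrArg QuaternionAlgebra.imK hI
  have r0 : (1 : Quaternion ℝ).re = 1 := rfl
  have r1 : (1 : Quaternion ℝ).imI = 0 := rfl
  have r2 : (1 : Quaternion ℝ).imJ = 0 := rfl
  have r3 : (1 : Quaternion ℝ).imK = 0 := rfl
  simp [pow_two, r0, r1, r2, r3] at h0 h1 h2 h3
  have h : I.re = 0 := by
    by_contra h
    have e1 : I.imI = 0 := by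
      apply (mul_eq_zero.1 (show I.re * I.imI = 0 by linarith)).resolve_left h
    have e2 : I.imJ = 0 := by
      apply (mul_eq_zero.1 (show I.re * I.imJ = 0 by linarith)).resolve_left h
    have e3 : I.imK = 0 := by
      apply (mul_eq_zero.1 (show I.re * I.imK = 0 by linarith)).resolve_left h
    rw [e1, e2, e3] at h0
    nlinarith [sq_nonneg I.re]
  refine ⟨h, ?_⟩
  rw [h] at h0
  linarith

/-- the embedding of the complex numbers determined by `I` -/
noncomputable def qbPhi (I : Quaternion ℝ) (hI : I ^ 2 = -1) : ℂ →ₐ[ℝ] Quaternion ℝ :=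
  Complex.lift ⟨I, by rw [← pow_two, hI]⟩

theorem qbPhi_apply (I : Quaternion ℝ) (hI : I ^ 2 = -1) (z : ℂ) :
    qbPhi I hI z = (z.re : Quaternion ℝ) + z.im • I := by
  simp [qbPhi, Complex.liftAux_apply]

theorem qbPhi_norm (I : Quaternion ℝ) (hI : I ^ 2 = -1) (z : ℂ) :
    ‖qbPhi I hI z‖ = ‖z‖ := by
  obtain ⟨h0, h1⟩ := qb_comp hI
  rw [← sq_eq_sq₀ (norm_nonneg _) (norm_nonneg _), Complex.sq_norm, Complex.normSq_apply,
    pow_two ‖_‖, ← Quaternion.normSq_eq_norm_mul_self, Quaternion.normSq_def', qbPhi_apply]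
  simp [h0]
  linear_combination z.im ^ 2 * h1

theorem qbPhi_surj (I : Quaternion ℝ) (hI : I ^ 2 = -1) (x : Quaternion ℝ)
    (hx : x ∈ Submodule.span ℝ ({1, I} : Set (Quaternion ℝ))) : ∃ z, qbPhi I hI z = x := by
  obtain ⟨c, d, rfl⟩ := Submodule.mem_span_pair.1 hx
  refine ⟨⟨c, d⟩, ?_⟩
  rw [qbPhi_apply]
  congr 1
  rw [← Algebra.algebraMap_eq_smul_one]
  rfl

/-- projection to the complex numbers determined by `I` -/
noncomputable def qbPi (I : Quaternion ℝ) : Quaternion ℝ →+ ℂ where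
  toFun q := ⟨q.re, -(I * q).re⟩
  map_zero' := by
    have r0 : (0 : Quaternion ℝ).re = 0 := rfl
    apply Complex.ext <;> simp [r0]
  map_add' a b := by
    apply Complex.ext
    · simp
    · simp [mul_add]; ring

theorem qbPi_mul (I : Quaternion ℝ) (hI : I ^ 2 = -1) (z : ℂ) (q : Quaternion ℝ) :
    qbPi I (qbPhi I hI z * q) = z * qbPi I q := by
  obtain ⟨h0, h1⟩ := qb_comp hI
  rw [qbPhi_apply]
  apply Complex.ext
  · simp [qbPi, h0]; ring
  · simp [qbPi, h0]
    linear_combination (z.im * q.re) * h1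

theorem qbPi_norm (I : Quaternion ℝ) (hI : I ^ 2 = -1) (q : Quaternion ℝ) :
    ‖qbPi I q‖ ≤ ‖q‖ := by
  obtain ⟨h0, h1⟩ := qb_comp hI
  rw [← sq_le_sq₀ (norm_nonneg _) (norm_nonneg _), Complex.sq_norm, Complex.normSq_apply,
    pow_two ‖_‖, ← Quaternion.normSq_eq_norm_mul_self, Quaternion.normSq_def']
  simp [qbPi, h0]
  nlinarith [sq_nonneg (I.imI * q.imJ - I.imJ * q.imI), sq_nonneg (I.imI * q.imK - I.imK * q.imI),
    sq_nonneg (I.imK * q.imJ - I.imJ * q.imK)]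

theorem qbPi_real (I : Quaternion ℝ) (hI : I ^ 2 = -1) (r : ℝ) : qbPi I (r : Quaternion ℝ) = r := by
  obtain ⟨h0, h1⟩ := qb_comp hI
  apply Complex.ext <;> simp [qbPi, h0]

theorem qb_dual (I : Quaternion ℝ) (hI : I ^ 2 = -1) (t : Quaternion ℝ) :
    ∃ L : Quaternion ℝ →+ ℂ, (∀ z q, L (qbPhi I hI z * q) = z * L q) ∧ (∀ q, ‖L q‖ ≤ ‖q‖) ∧
      ‖L t‖ = ‖t‖ := by
  by_cases ht : t = 0
  · exact ⟨0, by simp, by simp, by simp [ht]⟩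
  have htn : ‖t‖ ≠ 0 := norm_ne_zero_iff.2 ht
  refine ⟨(qbPi I).comp (AddMonoidHom.mulRight (‖t‖⁻¹ • star t)), ?_, ?_, ?_⟩
  · intro z q
    simp only [AddMonoidHom.comp_apply, AddMonoidHom.mulRight_apply]
    rw [mul_assoc, qbPi_mul]
  · intro q
    simp only [AddMonoidHom.comp_apply, AddMonoidHom.mulRight_apply]
    refine (qbPi_norm I hI _).trans ?_
    rw [norm_mul, norm_smul]
    simp [htn]
  · simp only [AddMonoidHom.comp_apply, AddMonoidHom.mulRight_apply]
    rw [mul_smul_comm, Quaternion.self_mul_star, Quaternion.normSq_eq_norm_mul_self,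
      ← Quaternion.coe_smul, qbPi_real I hI]
    simp [htn]

theorem qb_reflect (n : ℕ) (p : ℂ[X]) (hp : p.natDegree ≤ n) (x : ℂ) (hx : x ≠ 0) :
    (reflect n p).eval x⁻¹ * x ^ n = p.eval x := by
  let _ := invertibleOfNonzero hx
  have := eval₂_reflect_mul_pow (RingHom.id ℂ) x n p hp
  simpa [eval₂_eq_eval_map] using this

theorem qb_max (n : ℕ) (R Q : ℂ[X]) (hQ : Q.natDegree = n) (hQ0 : Q ≠ 0) (hR : R.natDegree ≤ n)
    (hroot : ∀ z, Q.eval z = 0 → ‖z‖ < 1)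
    (hle : ∀ z : ℂ, ‖z‖ = 1 → ‖R.eval z‖ ≤ ‖Q.eval z‖) :
    (∀ z : ℂ, 1 ≤ ‖z‖ → ‖R.eval z‖ ≤ ‖Q.eval z‖) ∧ ‖R.coeff n‖ ≤ ‖Q.coeff n‖ := by
  have hc : ∀ p : ℂ[X], (reflect n p).eval 0 = p.coeff n := by
    intro p
    rw [← coeff_zero_eq_eval_zero, coeff_reflect, revAt_zero]
  have hne : ∀ w : ℂ, ‖w‖ ≤ 1 → (reflect n Q).eval w ≠ 0 := by
    intro w hw h0
    by_cases hw0 : w = 0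
    · subst hw0
      rw [hc, ← hQ] at h0
      exact hQ0 (leadingCoeff_eq_zero.1 h0)
    · have h1 := qb_reflect n Q hQ.le w⁻¹ (inv_ne_zero hw0)
      rw [inv_inv, h0, zero_mul] at h1
      have h2 := hroot _ h1.symm
      rw [norm_inv] at h2
      have := (one_le_inv₀ (norm_pos_iff.2 hw0)).2 hw
      linarith
  have key : ∀ w : ℂ, ‖w‖ ≤ 1 → ‖(reflect n R).eval w‖ ≤ ‖(reflect n Q).eval w‖ := by
    intro w hw
    have hcl : closure (Metric.ball (0:ℂ) 1) = Metric.closedBall 0 1 :=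
      closure_ball _ one_ne_zero
    have hd : DiffContOnCl ℂ (fun w => (reflect n R).eval w / (reflect n Q).eval w)
        (Metric.ball (0:ℂ) 1) := by
      apply DifferentiableOn.diffContOnCl
      rw [hcl]
      apply DifferentiableOn.div
      · exact (Polynomial.differentiable _).differentiableOn
      · exact (Polynomial.differentiable _).differentiableOn
      · intro x hx
        exact hne x (by simpa using hx)
    have := Complex.norm_le_of_forall_mem_frontier_norm_le (C := 1) Metric.isBounded_ball hd ?_
      (z := w) (by rw [hcl]; simpa using hw)
    · simp only [norm_div] at this
      exact (div_le_one (norm_pos_iff.2 (hne w hw))).1 this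
    · intro z hz
      rw [frontier_ball _ one_ne_zero] at hz
      have hz1 : ‖z‖ = 1 := by simpa using hz
      have hz0 : z ≠ 0 := by rintro rfl; simp at hz1
      simp only [norm_div]
      rw [div_le_one (norm_pos_iff.2 (hne z hz1.le))]
      have h := hle z⁻¹ (by simp [hz1])
      rw [← qb_reflect n Q hQ.le _ (inv_ne_zero hz0), ← qb_reflect n R hR _ (inv_ne_zero hz0)] at h
      simpa [hz1] using h
  refine ⟨?_, ?_⟩
  · intro z hz
    have hz0 : z ≠ 0 := by rintro rfl; norm_num at hz
    rw [← qb_reflect n Q hQ.le z hz0, ← qb_reflect n R hR z hz0, norm_mul, norm_mul]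
    gcongr
    apply key
    rw [norm_inv]
    exact inv_le_one_of_one_le₀ hz
  · have := key 0 (by simp)
    rwa [hc, hc] at this

/-- removal of a point from the circle -/
theorem qb_dense (f : ℂ → ℝ) (hf : Continuous f) (z₀ : ℂ) (h₀ : ‖z₀‖ = 1)
    (h : ∀ z, ‖z‖ = 1 → z ≠ z₀ → 0 ≤ f z) : 0 ≤ f z₀ := by
  have ht : Filter.Tendsto (fun k : ℕ => z₀ * Complex.exp (((1 / ((k:ℝ) + 1) : ℝ) : ℂ) * Complex.I))
      Filter.atTop (nhds z₀) := by
    have h1 : Filter.Tendsto (fun k : ℕ => (1 / ((k:ℝ) + 1) : ℝ)) Filter.atTop (nhds 0) :=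
      tendsto_one_div_add_atTop_nhds_zero_nat
    have h2 : Continuous (fun t : ℝ => z₀ * Complex.exp ((t : ℂ) * Complex.I)) := by fun_prop
    have := (h2.tendsto 0).comp h1
    simp only [Complex.ofReal_zero, zero_mul, Complex.exp_zero, mul_one] at this
    exact this
  refine ge_of_tendsto' ((hf.tendsto z₀).comp ht) ?_
  intro k
  apply h
  · rw [norm_mul, Complex.norm_exp_ofReal_mul_I, h₀, one_mul]
  · intro he
    have hz : z₀ ≠ 0 := by rintro rfl; simp at h₀
    have h3 := mul_left_cancel₀ hz (he.trans (mul_one z₀).symm)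
    have h4 := congrArg Complex.im h3
    rw [Complex.exp_ofReal_mul_I_im] at h4
    have hp : (0:ℝ) < 1 / ((k:ℝ) + 1) := by positivity
    have hl : (1 / ((k:ℝ) + 1) : ℝ) ≤ 1 := by
      rw [div_le_one (by positivity)]
      have : (0:ℝ) ≤ k := by positivity
      linarith
    have := Real.sin_pos_of_pos_of_le_one hp hl
    simp only [Complex.one_im] at h4
    linarith

theorem qb_max' (n : ℕ) : ∀ (R Q : ℂ[X]), Q.natDegree = n → Q ≠ 0 → R.natDegree ≤ n →
    (∀ z, Q.eval z = 0 → ‖z‖ ≤ 1) →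
    (∀ z : ℂ, ‖z‖ = 1 → ‖R.eval z‖ ≤ ‖Q.eval z‖) →
    (∀ z : ℂ, 1 ≤ ‖z‖ → ‖R.eval z‖ ≤ ‖Q.eval z‖) ∧ ‖R.coeff n‖ ≤ ‖Q.coeff n‖ := by
  induction n with
  | zero =>
    intro R Q hQ hQ0 hR hroot hle
    apply qb_max 0 R Q hQ hQ0 hR _ hle
    intro z hz
    rw [eq_C_of_natDegree_eq_zero hQ, eval_C] at hz
    exfalso
    apply hQ0
    rw [eq_C_of_natDegree_eq_zero hQ, hz, C_0]
  | succ n ih =>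
    intro R Q hQ hQ0 hR hroot hle
    by_cases hs : ∃ z, ‖z‖ = 1 ∧ Q.eval z = 0
    swap
    · apply qb_max _ R Q hQ hQ0 hR _ hle
      intro z hz
      exact lt_of_le_of_ne (hroot z hz) fun h => hs ⟨z, h, hz⟩
    obtain ⟨z₀, h₀, hq⟩ := hs
    have hr : R.eval z₀ = 0 := by
      have := hle z₀ h₀
      rw [hq, norm_zero] at this
      exact norm_le_zero_iff.1 this
    obtain ⟨Q₁, rfl⟩ := dvd_iff_isRoot.2 hq
    obtain ⟨R₁, rfl⟩ := dvd_iff_isRoot.2 hr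
    have hQ1 : Q₁ ≠ 0 := right_ne_zero_of_mul hQ0
    have hX : (X - C z₀) ≠ 0 := X_sub_C_ne_zero z₀
    have dQ : Q₁.natDegree = n := by
      rw [natDegree_mul hX hQ1, natDegree_X_sub_C] at hQ
      omega
    have dR : R₁.natDegree ≤ n := by
      by_cases hR1 : R₁ = 0
      · simp [hR1]
      rw [natDegree_mul hX hR1, natDegree_X_sub_C] at hR
      omega
    have hcoe : ∀ p : ℂ[X], p.natDegree ≤ n → ((X - C z₀) * p).coeff (n + 1) = p.coeff n := by
      intro p hp
      rw [sub_mul, coeff_sub, coeff_X_mul, coeff_C_mul,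
        coeff_eq_zero_of_natDegree_lt (n := n + 1) (by omega)]
      simp
    have hle1 : ∀ z : ℂ, ‖z‖ = 1 → z ≠ z₀ → ‖R₁.eval z‖ ≤ ‖Q₁.eval z‖ := by
      intro z hz hne
      have := hle z hz
      simp only [eval_mul, norm_mul, eval_sub, eval_X, eval_C] at this
      exact le_of_mul_le_mul_left this (norm_pos_iff.2 (sub_ne_zero.2 hne))
    have h := ih R₁ Q₁ dQ hQ1 dR (fun z hz => hroot z (by simp [hz])) (by
      intro z hz
      by_cases hne : z = z₀
      · subst hne
        have := qb_dense (fun w => ‖Q₁.eval w‖ - ‖R₁.eval w‖) (by fun_prop) z hz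
          (fun w hw hw' => sub_nonneg.2 (hle1 w hw hw'))
        exact sub_nonneg.1 this
      · exact hle1 z hz hne)
    refine ⟨?_, ?_⟩
    · intro z hz
      simp only [eval_mul, norm_mul]
      gcongr
      exact h.1 z hz
    · rw [hcoe _ dR, hcoe _ dQ.le]
      exact h.2

theorem qb_gl (p : ℂ[X]) (hp : 0 < p.natDegree) (hroot : ∀ z, p.eval z = 0 → ‖z‖ ≤ 1) (x : ℂ)
    (hx : p.derivative.eval x = 0) : ‖x‖ ≤ 1 := by
  have hd : p.derivative ≠ 0 := by
    intro h
    have := derivative_eq_zero.1 h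
    omega
  have h1 := rootSet_derivative_subset_convexHull_rootSet (natDegree_pos_iff_degree_pos.1 hp)
    (show x ∈ p.derivative.rootSet ℂ by
      rw [mem_rootSet]; exact ⟨hd, by simpa using hx⟩)
  have h2 : convexHull ℝ (p.rootSet ℂ) ⊆ Metric.closedBall 0 1 := by
    apply convexHull_min _ (convex_closedBall _ _)
    intro z hz
    rw [mem_rootSet] at hz
    simpa using hroot z (by simpa using hz.2)
  simpa using h2 h1

theorem qb_complex (n : ℕ) (R Q : ℂ[X]) (hQ : Q.natDegree = n) (hn : 0 < n) (hR : R.natDegree ≤ n)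
    (hroot : ∀ z, Q.eval z = 0 → ‖z‖ ≤ 1)
    (hle : ∀ z : ℂ, ‖z‖ = 1 → ‖R.eval z‖ ≤ ‖Q.eval z‖) (x : ℂ) (hx : ‖x‖ = 1) :
    ‖R.derivative.eval x‖ ≤ ‖Q.derivative.eval x‖ := by
  have hQ0 : Q ≠ 0 := by rintro rfl; simp at hQ; omega
  obtain ⟨h1, h2⟩ := qb_max' n R Q hQ hQ0 hR hroot hle
  have key : ∀ y : ℂ, 1 < ‖y‖ → ‖R.derivative.eval y‖ ≤ ‖Q.derivative.eval y‖ := by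
    intro y hy
    by_contra! hlt
    have hq : Q.derivative.eval y ≠ 0 := fun h =>
      absurd (qb_gl Q (by omega) hroot y h) (not_le.2 hy)
    set l := R.derivative.eval y / Q.derivative.eval y with hl
    have hl1 : 1 < ‖l‖ := by
      rw [hl, norm_div, one_lt_div (norm_pos_iff.2 hq)]; exact hlt
    have big : ∀ u v : ℂ, u = l * v → ‖u‖ ≤ ‖v‖ → v = 0 := by
      intro u v huv hle
      by_contra hv
      have hv' := norm_pos_iff.2 hv
      rw [huv, norm_mul] at hle
      nlinarith
    have := qb_gl (R - C l * Q) ?_ ?_ y ?_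
    · linarith
    · have : (R - C l * Q).coeff n ≠ 0 := by
        intro h
        rw [coeff_sub, coeff_C_mul, sub_eq_zero] at h
        have := big _ _ h h2
        rw [← hQ] at this
        exact hQ0 (leadingCoeff_eq_zero.1 this)
      exact hn.trans_le (le_natDegree_of_ne_zero this)
    · intro z hz
      by_contra! hz1
      rw [eval_sub, eval_mul, eval_C, sub_eq_zero] at hz
      exact absurd (hroot z (big _ _ hz (h1 z hz1.le))) (not_le.2 hz1)
    · simp only [derivative_sub, derivative_C_mul, eval_sub, eval_mul, eval_C]
      rw [hl, div_mul_cancel₀ _ hq, sub_self]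
  have ht : Filter.Tendsto (fun k : ℕ => ((1 + 1 / ((k:ℝ) + 1) : ℝ) : ℂ) * x)
      Filter.atTop (nhds x) := by
    have h1 : Filter.Tendsto (fun k : ℕ => (1 / ((k:ℝ) + 1) : ℝ)) Filter.atTop (nhds 0) :=
      tendsto_one_div_add_atTop_nhds_zero_nat
    have h2 : Continuous (fun t : ℝ => ((1 + t : ℝ) : ℂ) * x) := by fun_prop
    have := (h2.tendsto 0).comp h1
    simp only [Complex.ofReal_one, add_zero, one_mul] at this
    exact this
  have hA : Continuous (fun w => ‖R.derivative.eval w‖) := by fun_prop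
  have hB : Continuous (fun w => ‖Q.derivative.eval w‖) := by fun_prop
  refine le_of_tendsto_of_tendsto' ((hA.tendsto x).comp ht) ((hB.tendsto x).comp ht) ?_
  intro k
  apply key
  have hp : (0:ℝ) < 1 / ((k:ℝ) + 1) := by positivity
  rw [norm_mul, hx, mul_one, Complex.norm_real, Real.norm_of_nonneg (by positivity)]
  linarith

theorem qb_eval (n : ℕ) (c : ℕ → ℂ) (z : ℂ) :
    (∑ k ∈ Finset.range (n + 1), C (c k) * X ^ k : ℂ[X]).eval z =
      ∑ k ∈ Finset.range (n + 1), z ^ k * c k := by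
  rw [eval_finsetSum]
  refine Finset.sum_congr rfl fun k _ => ?_
  rw [eval_mul, eval_C, eval_pow, eval_X, mul_comm]

theorem qb_eval_deriv (n : ℕ) (c : ℕ → ℂ) (z : ℂ) :
    (derivative (∑ k ∈ Finset.range (n + 1), C (c k) * X ^ k : ℂ[X])).eval z =
      ∑ k ∈ Finset.range n, z ^ k * (((k + 1 : ℕ) : ℂ) * c (k + 1)) := by
  rw [derivative_sum, eval_finsetSum, Finset.sum_range_succ']
  simp only [derivative_C_mul_X_pow, eval_mul, eval_C, eval_pow, eval_X]
  simp only [Nat.cast_zero, mul_zero, zero_mul, add_zero, Nat.add_sub_cancel]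
  exact Finset.sum_congr rfl fun k _ => by ring

theorem qb_natDegree (n : ℕ) (c : ℕ → ℂ) :
    (∑ k ∈ Finset.range (n + 1), C (c k) * X ^ k : ℂ[X]).natDegree ≤ n := by
  apply natDegree_sum_le_of_forall_le
  intro k hk
  have := Finset.mem_range.1 hk
  exact (natDegree_C_mul_X_pow_le _ _).trans (by omega)

theorem qb_natDegree' (n : ℕ) (c : ℕ → ℂ) (hc : c n ≠ 0) :
    (∑ k ∈ Finset.range (n + 1), C (c k) * X ^ k : ℂ[X]).natDegree = n := by
  apply le_antisymm (qb_natDegree n c)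
  apply le_natDegree_of_ne_zero
  simpa [finsetSum_coeff, coeff_X_pow] using hc


/-- **Quaternionic Bernstein comparison theorem.**
Let `P(X) = Σ_{k=0}^{dP} X^k a_k` and `Q(X) = Σ_{k=0}^{dQ} X^k b_k` be quaternionic
polynomials (right coefficients) with `deg P ≤ deg Q`.  Suppose there is an imaginary
unit `I` (`I² = -1`) such that all coefficients of `Q` lie in `ℂ_I = span_ℝ {1, I}`.
If every left root of `Q` has norm at most `1` and `‖P(x)‖ ≤ ‖Q(x)‖` for all `x` with
`‖x‖ = 1`, then `‖P'(x)‖ ≤ ‖Q'(x)‖` for every `x ∈ ℂ_I` with `‖x‖ = 1`. -/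
theorem quaternionic_bernstein_comparison
    (dP dQ : ℕ) (hdeg : dP ≤ dQ)
    (a b : ℕ → Quaternion ℝ) (haP : a dP ≠ 0) (hbQ : b dQ ≠ 0)
    (I : Quaternion ℝ) (hI : I ^ 2 = -1)
    (hb : ∀ k, b k ∈ Submodule.span ℝ ({1, I} : Set (Quaternion ℝ)))
    (hroots : ∀ x : Quaternion ℝ, (∑ k ∈ Finset.range (dQ + 1), x ^ k * b k) = 0 → ‖x‖ ≤ 1)
    (hPQ : ∀ x : Quaternion ℝ, ‖x‖ = 1 →
      ‖∑ k ∈ Finset.range (dP + 1), x ^ k * a k‖ ≤ ‖∑ k ∈ Finset.range (dQ + 1), x ^ k * b k‖) :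
    ∀ x : Quaternion ℝ, x ∈ Submodule.span ℝ ({1, I} : Set (Quaternion ℝ)) → ‖x‖ = 1 →
      ‖∑ k ∈ Finset.range dP, x ^ k * (((k + 1 : ℕ) : Quaternion ℝ) * a (k + 1))‖ ≤
      ‖∑ k ∈ Finset.range dQ, x ^ k * (((k + 1 : ℕ) : Quaternion ℝ) * b (k + 1))‖ := by

  intro x hx hx1
  rcases Nat.eq_zero_or_pos dQ with h0 | hpos
  · have : dP = 0 := by omega
    subst this
    subst h0
    simp
  obtain ⟨z, rfl⟩ := qbPhi_surj I hI x hx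
  choose β hβ using fun k => qbPhi_surj I hI (b k) (hb k)
  set t := ∑ k ∈ Finset.range dP, qbPhi I hI z ^ k * (((k + 1 : ℕ) : Quaternion ℝ) * a (k + 1))
    with ht
  obtain ⟨L, hL, hLn, hLt⟩ := qb_dual I hI t
  have hQe : ∀ w : ℂ, ∑ k ∈ Finset.range (dQ + 1), qbPhi I hI w ^ k * b k =
      qbPhi I hI ((∑ k ∈ Finset.range (dQ + 1), C (β k) * X ^ k : ℂ[X]).eval w) := by
    intro w
    rw [qb_eval, map_sum]
    exact Finset.sum_congr rfl fun k _ => by rw [map_mul, map_pow, hβ]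
  have hPe : ∀ w : ℂ, L (∑ k ∈ Finset.range (dP + 1), qbPhi I hI w ^ k * a k) =
      (∑ k ∈ Finset.range (dP + 1), C (L (a k)) * X ^ k : ℂ[X]).eval w := by
    intro w
    rw [qb_eval dP (fun k => L (a k)), map_sum]
    exact Finset.sum_congr rfl fun k _ => by rw [← map_pow, hL]
  have hQd : ∑ k ∈ Finset.range dQ, qbPhi I hI z ^ k *
        (((k + 1 : ℕ) : Quaternion ℝ) * b (k + 1)) =
      qbPhi I hI ((derivative (∑ k ∈ Finset.range (dQ + 1), C (β k) * X ^ k : ℂ[X])).eval z) := by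
    rw [qb_eval_deriv, map_sum]
    exact Finset.sum_congr rfl fun k _ => by rw [map_mul, map_pow, map_mul, map_natCast, hβ]
  have hPd : L t =
      (derivative (∑ k ∈ Finset.range (dP + 1), C (L (a k)) * X ^ k : ℂ[X])).eval z := by
    rw [qb_eval_deriv dP (fun k => L (a k)), ht, map_sum]
    refine Finset.sum_congr rfl fun k _ => ?_
    rw [← map_pow, hL, ← map_natCast (qbPhi I hI), hL]
  rw [hQd, qbPhi_norm, ← hLt, hPd]
  refine qb_complex dQ _ _ (qb_natDegree' dQ β ?_) hpos
    ((qb_natDegree dP fun k => L (a k)).trans hdeg) ?_ ?_ z (by rwa [qbPhi_norm] at hx1)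
  · intro h
    apply hbQ
    rw [← hβ, h, map_zero]
  · intro w hw
    rw [← qbPhi_norm I hI]
    apply hroots
    rw [hQe, hw, map_zero]
  · intro w hw
    rw [← hPe, ← qbPhi_norm I hI (eval w _), ← hQe]
    exact (hLn _).trans (hPQ _ (by rw [qbPhi_norm, hw]))
end

section
/- Let P(X) = Σ_{k=0}^d X^k c_k be a quaternionic polynomial. Define A(x) = Σ_{k=0}^d Z̃_k(x) c_k and B(x) = Σ_{k=0}^{d-1} Z̃_k(x) c_{k+1}, where Z̃_k are the real-valued zonal harmonics with Z̃_{-1}=0, Z̃_0=1, Z̃_k(x) = 2Re(x) Z̃_{k-1}(x) − |x|² Z̃_{k-2}(x). Then P(x) = A(x) − x̄ B(x) for every x ∈ ℍ, and the real components of A and B are harmonic functions on ℝ⁴. -/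
/-- `zonal (k+1) = Z̃_k`, with `zonal 0 = Z̃_{-1} = 0`, `zonal 1 = Z̃_0 = 1`, and
`Z̃_k(x) = 2 Re(x) Z̃_{k-1}(x) − |x|² Z̃_{k-2}(x)`. -/
noncomputable def zonal : ℕ → Quaternion ℝ → ℝ
  | 0, _ => 0
  | 1, _ => 1
  | (k + 2), x => 2 * x.re * zonal (k + 1) x - ‖x‖ ^ 2 * zonal k x

/-- Componentwise Laplacian of an `ℍ`-valued function of four real variables. -/
noncomputable def quatLaplacianH (f : Quaternion ℝ → Quaternion ℝ) (x : Quaternion ℝ) :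
    Quaternion ℝ :=
  iteratedFDeriv ℝ 2 f x ![1, 1] +
  iteratedFDeriv ℝ 2 f x ![⟨0,1,0,0⟩, ⟨0,1,0,0⟩] +
  iteratedFDeriv ℝ 2 f x ![⟨0,0,1,0⟩, ⟨0,0,1,0⟩] +
  iteratedFDeriv ℝ 2 f x ![⟨0,0,0,1⟩, ⟨0,0,0,1⟩]

/-- The unit `i`. -/
def qi : Quaternion ℝ := ⟨0,1,0,0⟩

/-- The unit `j`. -/
def qj : Quaternion ℝ := ⟨0,0,1,0⟩

/-- The unit `k`. -/
def qk : Quaternion ℝ := ⟨0,0,0,1⟩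

@[simp] theorem qi_re : qi.re = 0 := rfl
@[simp] theorem qi_imI : qi.imI = 1 := rfl
@[simp] theorem qi_imJ : qi.imJ = 0 := rfl
@[simp] theorem qi_imK : qi.imK = 0 := rfl
@[simp] theorem qj_re : qj.re = 0 := rfl
@[simp] theorem qj_imI : qj.imI = 0 := rfl
@[simp] theorem qj_imJ : qj.imJ = 1 := rfl
@[simp] theorem qj_imK : qj.imK = 0 := rfl
@[simp] theorem qk_re : qk.re = 0 := rfl
@[simp] theorem qk_imI : qk.imI = 0 := rfl
@[simp] theorem qk_imJ : qk.imJ = 0 := rfl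
@[simp] theorem qk_imK : qk.imK = 1 := rfl

theorem pow_eq_zonal (x : Quaternion ℝ) (k : ℕ) :
    x ^ k = ((zonal (k + 1) x : ℝ) : Quaternion ℝ) - star x * ((zonal k x : ℝ) : Quaternion ℝ) := by
  induction k with
  | zero => simp [zonal]
  | succ k ih =>
    have h1 : x * star x = ((‖x‖ ^ 2 : ℝ) : Quaternion ℝ) := by
      rw [Quaternion.self_mul_star, Quaternion.normSq_eq_norm_mul_self, sq]
    have h2 : x = ((2 * x.re : ℝ) : Quaternion ℝ) - star x := by
      ext <;> simp [two_mul]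
    rw [pow_succ', ih, mul_sub, ← mul_assoc, h1]
    conv_lhs => lhs; lhs; rw [h2]
    rw [show zonal (k + 1 + 1) x = 2 * x.re * zonal (k + 1) x - ‖x‖ ^ 2 * zonal k x from rfl]
    push_cast
    rw [sub_mul]
    abel

theorem zonal_contDiff (n : ℕ) : ContDiff ℝ 2 (zonal n) := by
  have hre : ContDiff ℝ 2 (fun x : Quaternion ℝ => x.re) := by
    have : (fun x : Quaternion ℝ => x.re) = fun x => innerSL ℝ (1 : Quaternion ℝ) x := by
      funext x; simp [Quaternion.inner_def]
    rw [this]; exact (innerSL ℝ (1 : Quaternion ℝ)).contDiff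
  induction n using Nat.twoStepInduction with
  | zero => exact contDiff_const
  | one => exact contDiff_const
  | more k h0 h1 =>
    exact ((contDiff_const.mul hre).mul h1).sub ((contDiff_id.norm_sq ℝ).mul h0)

theorem hasFDerivAt_re (x : Quaternion ℝ) :
    HasFDerivAt (fun x : Quaternion ℝ => x.re) (innerSL ℝ (1 : Quaternion ℝ)) x := by
  have : (fun x : Quaternion ℝ => x.re) = fun x => innerSL ℝ (1 : Quaternion ℝ) x := by
    funext x; simp [Quaternion.inner_def]
  rw [this]; exact (innerSL ℝ (1 : Quaternion ℝ)).hasFDerivAt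

/-- first directional derivative -/
noncomputable def zp (n : ℕ) (v x : Quaternion ℝ) : ℝ := fderiv ℝ (zonal n) x v

/-- second directional derivative -/
noncomputable def zq (n : ℕ) (v x : Quaternion ℝ) : ℝ := fderiv ℝ (zp n v) x v

theorem zonal_diff (n : ℕ) (x) : HasFDerivAt (zonal n) (fderiv ℝ (zonal n) x) x :=
  (((zonal_contDiff n).differentiable (by norm_num)) x).hasFDerivAt

theorem zp_diff (n : ℕ) (v x) : HasFDerivAt (zp n v) (fderiv ℝ (zp n v) x) x := by
  have h : ContDiff ℝ 1 (fderiv ℝ (zonal n)) := (zonal_contDiff n).fderiv_right (by norm_num)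
  have h2 : ContDiff ℝ 1 (zp n v) := h.clm_apply contDiff_const
  exact ((h2.differentiable (by norm_num)) x).hasFDerivAt

theorem zp_zero (v x) : zp 0 v x = 0 := by
  have : zonal 0 = fun _ => (0 : ℝ) := by funext x; rfl
  simp [zp, this]

theorem zp_one (v x) : zp 1 v x = 0 := by
  have : zonal 1 = fun _ => (1 : ℝ) := by funext x; rfl
  simp [zp, this]

theorem zp_rec (n : ℕ) (v x : Quaternion ℝ) :
    zp (n + 2) v x = 2 * v.re * zonal (n + 1) x + 2 * x.re * zp (n + 1) v x
      - 2 * inner ℝ x v * zonal n x - ‖x‖ ^ 2 * zp n v x := by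
  have h := (((hasFDerivAt_re x).const_mul 2).mul (zonal_diff (n + 1) x)).sub
    ((hasStrictFDerivAt_norm_sq x).hasFDerivAt.mul (zonal_diff n x))
  have h' : HasFDerivAt (zonal (n + 2)) _ x := h
  rw [zp, h'.fderiv]
  simp [zp, Quaternion.inner_def]
  ring

theorem zq_zero (v x) : zq 0 v x = 0 := by
  have : zp 0 v = fun _ => (0 : ℝ) := by funext x; exact zp_zero v x
  simp [zq, this]

theorem zq_one (v x) : zq 1 v x = 0 := by
  have : zp 1 v = fun _ => (0 : ℝ) := by funext x; exact zp_one v x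
  simp [zq, this]

theorem zq_rec (n : ℕ) (v x : Quaternion ℝ) :
    zq (n + 2) v x = 4 * v.re * zp (n + 1) v x + 2 * x.re * zq (n + 1) v x
      - 2 * ‖v‖ ^ 2 * zonal n x - 4 * inner ℝ x v * zp n v x - ‖x‖ ^ 2 * zq n v x := by
  have hin : HasFDerivAt (fun x : Quaternion ℝ => inner ℝ x v) (innerSL ℝ v) x := by
    have : (fun x : Quaternion ℝ => inner ℝ x v) = fun x => innerSL ℝ v x := by
      funext x; simp [real_inner_comm]
    rw [this]; exact (innerSL ℝ v).hasFDerivAt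
  have h := ((((zonal_diff (n + 1) x).const_mul (2 * v.re)).add
    (((hasFDerivAt_re x).const_mul 2).mul (zp_diff (n + 1) v x))).sub
    ((hin.const_mul 2).mul (zonal_diff n x))).sub
    ((hasStrictFDerivAt_norm_sq x).hasFDerivAt.mul (zp_diff n v x))
  have h' := h.congr_of_eventuallyEq (f₁ := zp (n + 2) v) (.of_forall (zp_rec n v))
  rw [zq, h'.fderiv]
  have hvv : inner ℝ v v = ‖v‖ ^ 2 := real_inner_self_eq_norm_sq v
  have e1 : fderiv ℝ (zonal (n + 1)) x v = zp (n + 1) v x := rfl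
  have e2 : fderiv ℝ (zonal n) x v = zp n v x := rfl
  have e3 : fderiv ℝ (zp (n + 1) v) x v = zq (n + 1) v x := rfl
  have e4 : fderiv ℝ (zp n v) x v = zq n v x := rfl
  have e5 : inner ℝ (1 : Quaternion ℝ) v = v.re := by simp [Quaternion.inner_def]
  simp only [sub_apply, add_apply,
    smul_apply, innerSL_apply_apply, smul_eq_mul, nsmul_eq_mul, hvv,
    e1, e2, e3, e4, e5]
  push_cast
  ring

theorem zp_re (n : ℕ) (x : Quaternion ℝ) : zp (n + 1) 1 x = (n + 1) * zonal n x := by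
  have hx : inner ℝ x (1 : Quaternion ℝ) = x.re := by simp [Quaternion.inner_def]
  induction n using Nat.twoStepInduction with
  | zero => simp [zp_one, zonal]
  | one => rw [zp_rec, zp_one, zp_zero]; simp [zonal, Quaternion.re_one]; norm_num
  | more k h0 h1 =>
    rw [zp_rec, h1, h0, hx]
    simp only [zonal, Quaternion.re_one]
    push_cast
    ring

theorem zp_euler (n : ℕ) (x : Quaternion ℝ) : zp n x x = (n - 1) * zonal n x := by
  induction n using Nat.twoStepInduction with
  | zero => simp [zp_zero, zonal]
  | one => simp [zp_one, zonal]
  | more k h0 h1 =>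
    rw [zp_rec, h1, h0, real_inner_self_eq_norm_sq]
    simp only [zonal]
    push_cast
    ring

theorem zp_sum (n : ℕ) (x : Quaternion ℝ) :
    x.re * zp n 1 x + x.imI * zp n qi x + x.imJ * zp n qj x
      + x.imK * zp n qk x = (n - 1) * zonal n x := by
  rw [← zp_euler]
  have hx : x = x.re • (1 : Quaternion ℝ) + x.imI • qi
      + x.imJ • qj + x.imK • qk := by
    ext <;> simp [Quaternion.re_one, Quaternion.imI_one, Quaternion.imJ_one, Quaternion.imK_one]
  have := congrArg (fderiv ℝ (zonal n) x) hx
  simp only [map_add, map_smul, smul_eq_mul] at this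
  exact this.symm

theorem zonal_harm (n : ℕ) (x : Quaternion ℝ) :
    zq n 1 x + zq n qi x + zq n qj x + zq n qk x = 0 := by
  induction n using Nat.twoStepInduction with
  | zero => simp [zq_zero]
  | one => simp [zq_one]
  | more k h0 h1 =>
    have hs := zp_sum k x
    have hr := zp_re k x
    have i0 : inner ℝ x (1 : Quaternion ℝ) = x.re := by simp [Quaternion.inner_def]
    have i1 : inner ℝ x qi = x.imI := by simp [Quaternion.inner_def]
    have i2 : inner ℝ x qj = x.imJ := by simp [Quaternion.inner_def]
    have i3 : inner ℝ x qk = x.imK := by simp [Quaternion.inner_def]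
    have n1 : ‖qi‖ ^ 2 = 1 := by
      rw [← real_inner_self_eq_norm_sq, Quaternion.inner_def]; simp
    have n2 : ‖qj‖ ^ 2 = 1 := by
      rw [← real_inner_self_eq_norm_sq, Quaternion.inner_def]; simp
    have n3 : ‖qk‖ ^ 2 = 1 := by
      rw [← real_inner_self_eq_norm_sq, Quaternion.inner_def]; simp
    simp only [zq_rec, i0, i1, i2, i3, n1, n2, n3, norm_one, Quaternion.re_one, qi_re, qj_re, qk_re]
    linear_combination 4 * hr - 4 * hs + 2 * x.re * h1 - ‖x‖ ^ 2 * h0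

theorem iter_two (n : ℕ) (v x : Quaternion ℝ) :
    iteratedFDeriv ℝ 2 (zonal n) x ![v, v] = zq n v x := by
  have h : ContDiff ℝ 1 (fderiv ℝ (zonal n)) := (zonal_contDiff n).fderiv_right (by norm_num)
  have hd := (h.differentiable (by norm_num)) x
  rw [iteratedFDeriv_two_apply, zq]
  have : zp n v = fun y => fderiv ℝ (zonal n) y v := rfl
  rw [this, fderiv_clm_apply hd (differentiableAt_const v)]
  simp

theorem sum_iter (m : ℕ) (c : ℕ → Quaternion ℝ) (v x : Quaternion ℝ) :
    iteratedFDeriv ℝ 2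
      (fun y => ∑ k ∈ Finset.range m, ((zonal (k + 1) y : ℝ) : Quaternion ℝ) * c k) x ![v, v]
      = ∑ k ∈ Finset.range m, zq (k + 1) v x • c k := by
  have hk (k : ℕ) : (fun y => ((zonal (k + 1) y : ℝ) : Quaternion ℝ) * c k)
      = (ContinuousLinearMap.toSpanSingleton ℝ (c k)) ∘ zonal (k + 1) := by
    funext y; simp [Quaternion.coe_mul_eq_smul]
  have hc (k : ℕ) : ContDiff ℝ 2 (fun y => ((zonal (k + 1) y : ℝ) : Quaternion ℝ) * c k) := by
    rw [hk]; exact (ContinuousLinearMap.contDiff _).comp (zonal_contDiff _)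
  rw [iteratedFDeriv_fun_sum_apply (fun k _ => (hc k).contDiffAt)]
  simp only [ContinuousMultilinearMap.sum_apply]
  refine Finset.sum_congr rfl fun k _ => ?_
  rw [hk, ContinuousLinearMap.iteratedFDeriv_comp_left _ (zonal_contDiff _).contDiffAt le_rfl]
  simp [iter_two]

theorem sum_harm (m : ℕ) (c : ℕ → Quaternion ℝ) (x : Quaternion ℝ) :
    quatLaplacianH
      (fun y => ∑ k ∈ Finset.range m, ((zonal (k + 1) y : ℝ) : Quaternion ℝ) * c k) x = 0 := by
  change iteratedFDeriv ℝ 2 _ x ![1, 1] + iteratedFDeriv ℝ 2 _ x ![qi, qi] +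
    iteratedFDeriv ℝ 2 _ x ![qj, qj] + iteratedFDeriv ℝ 2 _ x ![qk, qk] = 0
  simp only [sum_iter, ← Finset.sum_add_distrib, ← add_smul, zonal_harm]
  simp

/-- **Almansi type decomposition.**  For `P(X) = Σ_{k=0}^d X^k c_k`, setting
`A(x) = Σ_{k=0}^d Z̃_k(x) c_k` and `B(x) = Σ_{k=0}^{d-1} Z̃_k(x) c_{k+1}`, one has
`P(x) = A(x) − x̄ B(x)` for all `x`, and `A`, `B` have harmonic (real) components. -/
theorem almansi_decomposition (d : ℕ) (c : ℕ → Quaternion ℝ) :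
    (∀ x : Quaternion ℝ,
      (∑ k ∈ Finset.range (d + 1), x ^ k * c k) =
        (∑ k ∈ Finset.range (d + 1), ((zonal (k + 1) x : ℝ) : Quaternion ℝ) * c k) -
          star x * (∑ k ∈ Finset.range d, ((zonal (k + 1) x : ℝ) : Quaternion ℝ) * c (k + 1))) ∧
    (∀ x : Quaternion ℝ,
      quatLaplacianH
        (fun y => ∑ k ∈ Finset.range (d + 1), ((zonal (k + 1) y : ℝ) : Quaternion ℝ) * c k) x
        = 0) ∧
    (∀ x : Quaternion ℝ,
      quatLaplacianH
        (fun y => ∑ k ∈ Finset.range d, ((zonal (k + 1) y : ℝ) : Quaternion ℝ) * c (k + 1)) x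
        = 0) := by
  refine ⟨fun x => ?_, fun x => sum_harm _ c x, fun x => sum_harm _ (fun k => c (k + 1)) x⟩
  have h : ∀ k, x ^ k * c k = ((zonal (k + 1) x : ℝ) : Quaternion ℝ) * c k
      - star x * (((zonal k x : ℝ) : Quaternion ℝ) * c k) := fun k => by
    rw [pow_eq_zonal, sub_mul, mul_assoc]
  simp only [h, Finset.sum_sub_distrib, ← Finset.mul_sum]
  congr 2
  rw [Finset.sum_range_succ']
  simp [zonal]
end
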